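/- Intermediate strengthening of strong subadditivity: Let ρ₁₂₃ be a density matrix on H₁⊗H₂⊗H₃ and let k^1,…,k^M be operators on H₁ with ∑_{α=1}^M k^{α*}k^α = id_{H₁}. Set n^α = Tr[(k^α⊗id₂₃) ρ₁₂₃ (k^{α*}⊗id₂₃)], and for each α with n^α > 0 set ρ₂₃^α = Tr₁[(k^α⊗id₂₃) ρ₁₂₃ (k^{α*}⊗id₂₃)]/n^α and ρ₂^α = Tr₃ ρ₂₃^α. Then S[ρ₁₂₃] − S[ρ₁₂] ≤ ∑_{α : n^α>0} n^α ( S[ρ₂₃^α] − S[ρ₂^α] ) ≤ S[ρ₂₃] − S[ρ₂]. -/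

import Mathlib

open Matrix Kronecker Real
open scoped ComplexOrder

/-- Von Neumann entropy of a (Hermitian) matrix: the sum of `-λ ln λ` over its
eigenvalues, with the convention `0 ln 0 = 0`. -/
noncomputable def entropy {n : Type*} [Fintype n] [DecidableEq n]
    (A : Matrix n n ℂ) : ℝ :=
  if h : A.IsHermitian then ∑ i, Real.negMulLog (h.eigenvalues i) else 0

/-- Partial trace over the first factor of a twofold tensor product. -/
noncomputable def ptraceFst {m k : Type*} [Fintype m]
    (ρ : Matrix (m × k) (m × k) ℂ) : Matrix k k ℂ :=
  Matrix.of fun i j => ∑ a : m, ρ (a, i) (a, j)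

/-- Partial trace over the second factor of a twofold tensor product. -/
noncomputable def ptraceSnd {m k : Type*} [Fintype k]
    (ρ : Matrix (m × k) (m × k) ℂ) : Matrix m m ℂ :=
  Matrix.of fun i j => ∑ a : k, ρ (i, a) (j, a)

/-- Partial trace over the first factor of a threefold tensor product
(indexed as `(H₁ ⊗ H₂) ⊗ H₃`). -/
noncomputable def ptraceFst₃ {a b c : Type*} [Fintype a]
    (ρ : Matrix ((a × b) × c) ((a × b) × c) ℂ) : Matrix (b × c) (b × c) ℂ :=
  Matrix.of fun p q => ∑ i : a, ρ ((i, p.1), p.2) ((i, q.1), q.2)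

/-!
For a state `σ` with first marginal `σₐ`, the difference `S[σ] - S[σₐ]` is minus the relative
entropy of `σ` with respect to `σₐ ⊗ 1`. In these terms the first inequality is monotonicity of
relative entropy under the instrument given by the `k α` followed by the partial trace over the
first factor, and the second is joint subadditivity of relative entropy, since the unnormalised
post-measurement states sum to `ρ₂₃`.

Both properties come from the variational formula
`Tr A (L_B + t R_A)⁻¹ A = sup_X (2 Re Tr A X - Tr X B Xᴴ - t Tr Xᴴ A X)`, where `L_B` and `R_A` are
left and right multiplication; its right-hand side is linear in `(A, B)` for fixed `X` and behaves
well under `X = ∑ Kᵢᴴ Xᵢ Kᵢ`. In terms of the Nussbaum–Szkoła distributions `p`, `q` of `(A, B)` the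
relative entropy is the classical `D(p ‖ q)` and the left-hand side is `-d/dt D(p ‖ q + t p)`, so
integrating over `t` transfers an inequality between the left-hand sides to relative entropies.
-/

section Classical

open Filter Topology

variable {ι κ : Type*} [Fintype ι] [Fintype κ]

/-- Relative entropy (Kullback–Leibler divergence) of two finite families of nonnegative weights.
It has its usual meaning when `q i = 0` implies `p i = 0`; elsewhere `log (p i / 0) = 0`. -/
noncomputable def weightRelEntropy (p q : ι → ℝ) : ℝ :=
  ∑ i, p i * log (p i / q i)

/-- The classical counterpart of `Tr A (L_B + t R_A)⁻¹ A`, where `L_B` and `R_A` are left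
multiplication by `B` and right multiplication by `A`; terms with `p i = q i = 0` vanish. -/
noncomputable def resolventSum (t : ℝ) (p q : ι → ℝ) : ℝ :=
  ∑ i, p i ^ 2 / (q i + t * p i)

theorem hasDerivAt_weightRelEntropy_add_smul {p q : ι → ℝ} (hp : 0 ≤ p) (hq : 0 ≤ q)
    (hpq : ∀ i, q i = 0 → p i = 0) {t : ℝ} (ht : 0 ≤ t) :
    HasDerivAt (fun s => weightRelEntropy p (q + s • p)) (-resolventSum t p q) t := by
  rw [resolventSum, ← Finset.sum_neg_distrib]
  refine HasDerivAt.fun_sum fun i _ => ?_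
  rcases (hp i).eq_or_lt with hpi | hpi
  · simpa [← hpi] using hasDerivAt_const t (0 : ℝ)
  replace hpi : 0 < p i := hpi
  have hqi : 0 < q i := (hq i).lt_of_ne fun h => hpi.ne' (hpq i h.symm)
  have hden : HasDerivAt (fun s => q i + s * p i) (p i) t := by
    simpa using ((hasDerivAt_id t).mul_const (p i)).const_add (q i)
  have hden_pos : 0 < q i + t * p i := by positivity
  refine ((((hasDerivAt_const t (p i)).div hden hden_pos.ne').log
    (div_pos hpi hden_pos).ne').const_mul (p i)).congr_deriv ?_
  simp only [Pi.div_apply]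
  field_simp
  ring

theorem tendsto_weightRelEntropy_add_smul_add_log {p q : ι → ℝ} (hp : 0 ≤ p) (hq : 0 ≤ q) :
    Tendsto (fun t => weightRelEntropy p (q + t • p) + (∑ i, p i) * log t) atTop (𝓝 0) := by
  have hterm (i : ι) :
      Tendsto (fun t => p i * log (p i / (q i + t * p i)) + p i * log t) atTop (𝓝 0) := by
    rcases (hp i).eq_or_lt with hpi | hpi
    · simp [← hpi]
    refine Tendsto.congr' ?_
      (by simpa using (tendsto_log_comp_add_sub_log (q i / p i)).const_mul (-p i))
    filter_upwards [eventually_gt_atTop 0] with t ht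
    replace hpi : 0 < p i := hpi
    have hqi : 0 ≤ q i := hq i
    rw [show p i / (q i + t * p i) = (t + q i / p i)⁻¹ by field_simp; ring, log_inv]
    ring
  simpa [weightRelEntropy, Finset.sum_add_distrib, Finset.sum_mul]
    using tendsto_finsetSum Finset.univ fun i _ => hterm i

/-- The difference of `t ↦ D(p ‖ q + t p)` and its primed analogue has derivative of constant sign
by `h`, and tends to `0` at infinity because the total weights agree; compare it with `t = 0`. -/
theorem weightRelEntropy_le_of_resolventSum_le {p q : ι → ℝ} {p' q' : κ → ℝ}
    (hp : 0 ≤ p) (hq : 0 ≤ q) (hpq : ∀ i, q i = 0 → p i = 0)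
    (hp' : 0 ≤ p') (hq' : 0 ≤ q') (hpq' : ∀ i, q' i = 0 → p' i = 0)
    (hsum : ∑ i, p' i = ∑ i, p i)
    (h : ∀ t, 0 < t → resolventSum t p' q' ≤ resolventSum t p q) :
    weightRelEntropy p' q' ≤ weightRelEntropy p q := by
  let gap (t : ℝ) := weightRelEntropy p (q + t • p) - weightRelEntropy p' (q' + t • p')
  have hderiv (t : ℝ) (ht : 0 ≤ t) :
      HasDerivAt gap (-resolventSum t p q - -resolventSum t p' q') t :=
    (hasDerivAt_weightRelEntropy_add_smul hp hq hpq ht).sub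
      (hasDerivAt_weightRelEntropy_add_smul hp' hq' hpq' ht)
  have hanti : AntitoneOn gap (Set.Ici 0) := by
    refine antitoneOn_of_deriv_nonpos (convex_Ici 0)
      (fun t ht => (hderiv t ht).continuousAt.continuousWithinAt) ?_ ?_
    all_goals simp only [interior_Ici, Set.mem_Ioi]; intro t ht
    · exact (hderiv t ht.le).differentiableAt.differentiableWithinAt
    · rw [(hderiv t ht.le).deriv]
      linarith [h t ht]
  have hlim : Tendsto gap atTop (𝓝 0) := by
    simpa [gap, hsum] using (tendsto_weightRelEntropy_add_smul_add_log hp hq).sub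
      (tendsto_weightRelEntropy_add_smul_add_log hp' hq')
  have hgap : 0 ≤ gap 0 := by
    refine le_of_tendsto hlim ?_
    filter_upwards [eventually_ge_atTop 0] with t ht
    exact hanti Set.self_mem_Ici ht ht
  simpa [gap] using hgap

theorem sum_weightRelEntropy_le_of_sum_resolventSum_le {μ ν : Type*} [Fintype μ] [Fintype ν]
    {p q : ι → μ → ℝ} {p' q' : κ → ν → ℝ}
    (hp : ∀ i, 0 ≤ p i) (hq : ∀ i, 0 ≤ q i) (hpq : ∀ i x, q i x = 0 → p i x = 0)
    (hp' : ∀ j, 0 ≤ p' j) (hq' : ∀ j, 0 ≤ q' j) (hpq' : ∀ j y, q' j y = 0 → p' j y = 0)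
    (hsum : ∑ j, ∑ y, p' j y = ∑ i, ∑ x, p i x)
    (h : ∀ t, 0 < t → ∑ j, resolventSum t (p' j) (q' j) ≤ ∑ i, resolventSum t (p i) (q i)) :
    ∑ j, weightRelEntropy (p' j) (q' j) ≤ ∑ i, weightRelEntropy (p i) (q i) := by
  simp only [← Fintype.sum_prod_type', weightRelEntropy, resolventSum] at hsum h ⊢
  exact weightRelEntropy_le_of_resolventSum_le (fun x => hp x.1 x.2) (fun x => hq x.1 x.2)
    (fun x => hpq x.1 x.2) (fun y => hp' y.1 y.2) (fun y => hq' y.1 y.2)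
    (fun y => hpq' y.1 y.2) hsum h

end Classical

section ResolventForm

variable {ι m n : Type*} [Fintype ι] [Fintype m] [Fintype n] {A B : Matrix n n ℂ}

/-- `A` and `B` are positive semidefinite and `ker B ≤ ker A`: the pairs of positive matrices whose
relative entropy is finite. -/
structure IsDominatedBy (A B : Matrix n n ℂ) : Prop where
  left : A.PosSemidef
  right : B.PosSemidef
  mulVec_eq_zero : ∀ x, B *ᵥ x = 0 → A *ᵥ x = 0

theorem IsDominatedBy.sum {A B : ι → Matrix n n ℂ} (h : ∀ i, IsDominatedBy (A i) (B i)) :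
    IsDominatedBy (∑ i, A i) (∑ i, B i) where
  left := posSemidef_sum _ fun i _ => (h i).left
  right := posSemidef_sum _ fun i _ => (h i).right
  mulVec_eq_zero x hx := by
    have hsum : ∑ i, star x ⬝ᵥ (B i *ᵥ x) = 0 := by
      rw [← dotProduct_sum, ← sum_mulVec, hx, dotProduct_zero]
    rw [Finset.sum_eq_zero_iff_of_nonneg fun i _ => (h i).right.dotProduct_mulVec_nonneg x] at hsum
    rw [sum_mulVec]
    exact Finset.sum_eq_zero fun i hi => (h i).mulVec_eq_zero x
      (((h i).right.dotProduct_mulVec_zero_iff x).1 (hsum i hi))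

theorem IsDominatedBy.mul_mul_conjTranspose_same (h : IsDominatedBy A B) (K : Matrix m n ℂ) :
    IsDominatedBy (K * A * Kᴴ) (K * B * Kᴴ) where
  left := h.left.mul_mul_conjTranspose_same K
  right := h.right.mul_mul_conjTranspose_same K
  mulVec_eq_zero x hx := by
    have hquad : star (Kᴴ *ᵥ x) ⬝ᵥ (B *ᵥ (Kᴴ *ᵥ x)) = 0 := by
      rw [star_mulVec, conjTranspose_conjTranspose, ← dotProduct_mulVec, mulVec_mulVec,
        mulVec_mulVec, hx, dotProduct_zero]
    rw [← mulVec_mulVec, ← mulVec_mulVec,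
      h.mulVec_eq_zero _ ((h.right.dotProduct_mulVec_zero_iff _).1 hquad), mulVec_zero]

/-- For `t > 0` the supremum over `X` of this concave functional is
`Tr A (L_B + t R_A)⁻¹ A`, where `L_B` and `R_A` are left multiplication by `B` and right
multiplication by `A`. -/
noncomputable def resolventForm (t : ℝ) (A B X : Matrix n n ℂ) : ℝ :=
  2 * (A * X).trace.re - (X * B * Xᴴ).trace.re - t * (Xᴴ * A * X).trace.re

theorem sum_resolventForm (t : ℝ) (A B : ι → Matrix n n ℂ) (X : Matrix n n ℂ) :
    ∑ i, resolventForm t (A i) (B i) X = resolventForm t (∑ i, A i) (∑ i, B i) X := by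
  simp only [resolventForm, Finset.sum_sub_distrib, Finset.mul_sum, Matrix.sum_mul,
    trace_sum, Complex.re_sum]

/-- Expand `0 ≤ ∑ i, Tr (Zᵢ Kᵢ - Kᵢ X) B (Zᵢ Kᵢ - Kᵢ X)ᴴ` with `X = ∑ i, Kᵢᴴ Zᵢ Kᵢ`. -/
theorem re_trace_sum_mul_mul_conjTranspose_le [DecidableEq n] {K : ι → Matrix m n ℂ}
    (hK : ∑ i, (K i)ᴴ * K i = 1) (hB : B.PosSemidef) (Z : ι → Matrix m m ℂ) :
    ((∑ i, (K i)ᴴ * Z i * K i) * B * (∑ i, (K i)ᴴ * Z i * K i)ᴴ).trace.re ≤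
      ∑ i, (Z i * (K i * B * (K i)ᴴ) * (Z i)ᴴ).trace.re := by
  set X := ∑ i, (K i)ᴴ * Z i * K i with hX
  have hnonneg : 0 ≤ (∑ i, ((Z i * K i - K i * X) * B * (Z i * K i - K i * X)ᴴ).trace).re := by
    rw [Complex.re_sum]
    exact Finset.sum_nonneg fun i _ =>
      (Complex.le_def.1 (hB.mul_mul_conjTranspose_same _).trace_nonneg).1
  have hexpand (i : ι) : ((Z i * K i - K i * X) * B * (Z i * K i - K i * X)ᴴ).trace =
      (Z i * (K i * B * (K i)ᴴ) * (Z i)ᴴ).trace - ((K i)ᴴ * Z i * K i * (B * Xᴴ)).trace -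
        (X * B * ((K i)ᴴ * Z i * K i)ᴴ).trace + ((K i)ᴴ * K i * (X * B * Xᴴ)).trace := by
    have hcomm : (K i * X * B * (Z i * K i)ᴴ).trace = (X * B * ((K i)ᴴ * Z i * K i)ᴴ).trace := by
      rw [Matrix.mul_assoc, Matrix.mul_assoc, trace_mul_comm]
      simp only [conjTranspose_mul, conjTranspose_conjTranspose, Matrix.mul_assoc]
    have hcomm' (Y : Matrix m n ℂ) : (Y * (K i * X)ᴴ).trace = ((K i)ᴴ * Y * Xᴴ).trace := by
      rw [conjTranspose_mul, ← Matrix.mul_assoc, trace_mul_comm, Matrix.mul_assoc]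
    simp only [conjTranspose_sub, Matrix.mul_sub, Matrix.sub_mul, trace_sub, hcomm, hcomm']
    simp only [conjTranspose_mul, Matrix.mul_assoc]
    ring
  have hcross : ∑ i, ((K i)ᴴ * Z i * K i * (B * Xᴴ)).trace = (X * B * Xᴴ).trace := by
    rw [← trace_sum, ← Matrix.sum_mul, ← hX, Matrix.mul_assoc]
  have hcross' : ∑ i, (X * B * ((K i)ᴴ * Z i * K i)ᴴ).trace = (X * B * Xᴴ).trace := by
    rw [← trace_sum, ← Matrix.mul_sum, ← conjTranspose_sum, ← hX]
  have hsquare : ∑ i, ((K i)ᴴ * K i * (X * B * Xᴴ)).trace = (X * B * Xᴴ).trace := by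
    rw [← trace_sum, ← Matrix.sum_mul, hK, Matrix.one_mul]
  simp only [hexpand, Finset.sum_add_distrib, Finset.sum_sub_distrib, hcross, hcross', hsquare,
    sub_add_cancel, Complex.sub_re, Complex.re_sum] at hnonneg
  exact sub_nonneg.1 hnonneg

theorem sum_resolventForm_mul_mul_conjTranspose_le [DecidableEq n] {K : ι → Matrix m n ℂ}
    (hK : ∑ i, (K i)ᴴ * K i = 1) (hA : A.PosSemidef) (hB : B.PosSemidef) {t : ℝ} (ht : 0 ≤ t)
    (Z : ι → Matrix m m ℂ) :
    ∑ i, resolventForm t (K i * A * (K i)ᴴ) (K i * B * (K i)ᴴ) (Z i) ≤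
      resolventForm t A B (∑ i, (K i)ᴴ * Z i * K i) := by
  have hlin : (A * ∑ i, (K i)ᴴ * Z i * K i).trace.re =
      ∑ i, (K i * A * (K i)ᴴ * Z i).trace.re := by
    rw [Matrix.mul_sum, trace_sum, Complex.re_sum]
    refine Finset.sum_congr rfl fun i _ => ?_
    rw [← Matrix.mul_assoc, trace_mul_comm]
    simp only [Matrix.mul_assoc]
  have hright := re_trace_sum_mul_mul_conjTranspose_le hK hB Z
  have hleft := re_trace_sum_mul_mul_conjTranspose_le hK hA fun i => (Z i)ᴴ
  have hstar : ∑ i, (K i)ᴴ * (Z i)ᴴ * K i = (∑ i, (K i)ᴴ * Z i * K i)ᴴ := by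
    simp [conjTranspose_sum, Matrix.mul_assoc]
  simp only [hstar, conjTranspose_conjTranspose] at hleft
  simp only [resolventForm, Finset.sum_sub_distrib, ← Finset.mul_sum, hlin]
  gcongr

end ResolventForm

section Spectral

variable {n : Type*} [Fintype n] [DecidableEq n] {A B : Matrix n n ℂ}

theorem entropy_eq_re_trace_cfc (hA : A.IsHermitian) :
    entropy A = (cfc negMulLog A).trace.re := by
  rw [entropy, dif_pos hA, hA.cfc_eq, Matrix.IsHermitian.cfc, Unitary.conjStarAlgAut_apply,
    trace_mul_cycle, Unitary.coe_star_mul_self, one_mul, trace_diagonal]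
  simp

theorem cfc_mul_log (hA : A.IsHermitian) : A * cfc log A = -cfc negMulLog A := by
  have hcont (f : ℝ → ℝ) : ContinuousOn f (spectrum ℝ A) := A.finite_real_spectrum.continuousOn f
  conv_lhs => enter [1]; rw [← cfc_id' ℝ A]
  rw [← cfc_mul _ _ A (hcont _) (hcont _), ← cfc_neg]
  simp [negMulLog_def]

theorem entropy_smul (hA : A.IsHermitian) (c : ℝ) :
    entropy ((c : ℂ) • A) = c * entropy A + negMulLog c * A.trace.re := by
  have hcA : ((c : ℂ) • A).IsHermitian := by
    simp [Matrix.IsHermitian, hA.eq]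
  have hcfc : cfc negMulLog (c • A) = c • cfc negMulLog A + negMulLog c • A := by
    have hcont (f : ℝ → ℝ) : ContinuousOn f (spectrum ℝ A) :=
      A.finite_real_spectrum.continuousOn f
    conv_rhs => enter [2, 2]; rw [← cfc_id' ℝ A]
    rw [← cfc_comp_smul c negMulLog A, ← cfc_smul c negMulLog A (hcont _),
      ← cfc_smul (negMulLog c) (fun x : ℝ => x) A (hcont _), ← cfc_add A _ _ (hcont _) (hcont _)]
    refine cfc_congr fun x _ => ?_
    simp only [smul_eq_mul, negMulLog_mul]
    ring
  rw [entropy_eq_re_trace_cfc hcA, entropy_eq_re_trace_cfc hA, Complex.coe_smul, hcfc]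
  simp

/-- The matrix of `X` with respect to an orthonormal eigenbasis of `A` on the left and one of `B`
on the right. -/
noncomputable def eigenCoeff (hA : A.IsHermitian) (hB : B.IsHermitian) (X : Matrix n n ℂ) :
    Matrix n n ℂ :=
  star (hA.eigenvectorUnitary : Matrix n n ℂ) * X * hB.eigenvectorUnitary

theorem eigenCoeff_surjective (hA : A.IsHermitian) (hB : B.IsHermitian) :
    Function.Surjective (eigenCoeff hA hB) := by
  refine fun x => ⟨hA.eigenvectorUnitary * x * star (hB.eigenvectorUnitary : Matrix n n ℂ), ?_⟩
  simp only [eigenCoeff, Matrix.mul_assoc, Unitary.coe_star_mul_self, Matrix.mul_one]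
  rw [← Matrix.mul_assoc, Unitary.coe_star_mul_self, Matrix.one_mul]

theorem eigenCoeff_self (hA : A.IsHermitian) (hB : B.IsHermitian) (i j : n) :
    eigenCoeff hA hB A i j = hA.eigenvalues i * eigenCoeff hA hB 1 i j := by
  have hUA : star (hA.eigenvectorUnitary : Matrix n n ℂ) * A =
      diagonal (fun i => (hA.eigenvalues i : ℂ)) * star (hA.eigenvectorUnitary : Matrix n n ℂ) := by
    conv_lhs => enter [2]; rw [hA.spectral_theorem, Unitary.conjStarAlgAut_apply]
    simp only [← Matrix.mul_assoc, Unitary.coe_star_mul_self, Matrix.one_mul]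
    rfl
  rw [eigenCoeff, eigenCoeff, hUA, Matrix.mul_one, Matrix.mul_assoc, diagonal_mul]

theorem trace_cfc_mul_mul_cfc_mul_conjTranspose (hA : A.IsHermitian) (hB : B.IsHermitian)
    (f g : ℝ → ℝ) (X Y : Matrix n n ℂ) :
    (cfc f A * X * cfc g B * Yᴴ).trace =
      ∑ p : n × n, f (hA.eigenvalues p.1) * g (hB.eigenvalues p.2) *
        (eigenCoeff hA hB X p.1 p.2 * star (eigenCoeff hA hB Y p.1 p.2)) := by
  have hY : (eigenCoeff hA hB Y)ᴴ =
      star (hB.eigenvectorUnitary : Matrix n n ℂ) * Yᴴ * hA.eigenvectorUnitary := by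
    simp [eigenCoeff, star_eq_conjTranspose, Matrix.mul_assoc]
  calc
    _ = (diagonal (fun i => (f (hA.eigenvalues i) : ℂ)) * eigenCoeff hA hB X *
          diagonal (fun j => (g (hB.eigenvalues j) : ℂ)) * (eigenCoeff hA hB Y)ᴴ).trace := by
      rw [hY, hA.cfc_eq, hB.cfc_eq, IsHermitian.cfc, IsHermitian.cfc,
        Unitary.conjStarAlgAut_apply, Unitary.conjStarAlgAut_apply]
      simp only [eigenCoeff, Matrix.mul_assoc]
      rw [trace_mul_comm (hA.eigenvectorUnitary : Matrix n n ℂ)]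
      simp only [Matrix.mul_assoc]
      rfl
    _ = _ := by
      rw [trace, Fintype.sum_prod_type]
      refine Finset.sum_congr rfl fun i _ => ?_
      rw [diag_apply, mul_apply]
      refine Finset.sum_congr rfl fun j _ => ?_
      rw [mul_diagonal, diagonal_mul, conjTranspose_apply]
      ring

/-- First Nussbaum–Szkoła distribution of `(A, B)`: the weight of `(i, j)` is `aᵢ |⟨uᵢ, vⱼ⟩|²` for
eigenvectors `uᵢ` of `A` and `vⱼ` of `B`. The quantum relative entropy of `A` and `B` is the
classical one of the two distributions. -/
noncomputable def nussbaumSzkolaFst (hA : A.IsHermitian) (hB : B.IsHermitian) (p : n × n) : ℝ :=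
  hA.eigenvalues p.1 * Complex.normSq (eigenCoeff hA hB 1 p.1 p.2)

/-- Second Nussbaum–Szkoła distribution of `(A, B)`: the weight of `(i, j)` is
`bⱼ |⟨uᵢ, vⱼ⟩|²`. -/
noncomputable def nussbaumSzkolaSnd (hA : A.IsHermitian) (hB : B.IsHermitian) (p : n × n) : ℝ :=
  hB.eigenvalues p.2 * Complex.normSq (eigenCoeff hA hB 1 p.1 p.2)

theorem re_trace_cfc_mul_cfc (hA : A.IsHermitian) (hB : B.IsHermitian) (f g : ℝ → ℝ) :
    (cfc f A * cfc g B).trace.re = ∑ p : n × n,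
      f (hA.eigenvalues p.1) * g (hB.eigenvalues p.2) *
        Complex.normSq (eigenCoeff hA hB 1 p.1 p.2) := by
  have h := trace_cfc_mul_mul_cfc_mul_conjTranspose hA hB f g 1 1
  rw [Matrix.mul_one, conjTranspose_one, Matrix.mul_one] at h
  simp only [Complex.star_def, Complex.mul_conj] at h
  rw [h]
  exact_mod_cast Complex.ofReal_re _

theorem sum_nussbaumSzkolaFst (hA : A.IsHermitian) (hB : B.IsHermitian) :
    ∑ p, nussbaumSzkolaFst hA hB p = A.trace.re := by
  have h := re_trace_cfc_mul_cfc hA hB id 1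
  rw [cfc_id ℝ A, Pi.one_def, cfc_const_one ℝ B, Matrix.mul_one] at h
  simp [h, nussbaumSzkolaFst]

/-- Quantum (Umegaki) relative entropy `Re Tr A (log A - log B)`. The logarithm of the functional
calculus vanishes on kernels, so this is the usual quantity when `A` is dominated by `B` in the
sense of `IsDominatedBy`, and a junk value otherwise. -/
noncomputable def quantumRelEntropy (A B : Matrix n n ℂ) : ℝ :=
  (A * (cfc log A - cfc log B)).trace.re

namespace IsDominatedBy

theorem nussbaumSzkolaFst_nonneg (h : IsDominatedBy A B) :
    0 ≤ nussbaumSzkolaFst h.left.isHermitian h.right.isHermitian :=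
  fun _ => mul_nonneg (h.left.eigenvalues_nonneg _) (Complex.normSq_nonneg _)

theorem nussbaumSzkolaSnd_nonneg (h : IsDominatedBy A B) :
    0 ≤ nussbaumSzkolaSnd h.left.isHermitian h.right.isHermitian :=
  fun _ => mul_nonneg (h.right.eigenvalues_nonneg _) (Complex.normSq_nonneg _)

theorem nussbaumSzkolaFst_eq_zero (h : IsDominatedBy A B) (p : n × n)
    (hp : nussbaumSzkolaSnd h.left.isHermitian h.right.isHermitian p = 0) :
    nussbaumSzkolaFst h.left.isHermitian h.right.isHermitian p = 0 := by
  have hA := h.left.isHermitian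
  have hB := h.right.isHermitian
  rcases mul_eq_zero.1 hp with hb | hc
  · have hv : A *ᵥ hB.eigenvectorBasis p.2 = 0 :=
      h.mulVec_eq_zero _ (by rw [hB.mulVec_eigenvectorBasis, hb, zero_smul])
    have hu : hA.eigenvalues p.1 * eigenCoeff hA hB 1 p.1 p.2 = 0 := by
      rw [← eigenCoeff_self, eigenCoeff, Matrix.mul_assoc, mul_apply]
      have hcol (k : n) : (A * (hB.eigenvectorUnitary : Matrix n n ℂ)) k p.2 = 0 :=
        congrFun hv k
      simp [hcol]
    rcases mul_eq_zero.1 hu with ha | hc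
    · simp [nussbaumSzkolaFst, Complex.ofReal_eq_zero.1 ha]
    · simp [nussbaumSzkolaFst, hc]
  · rw [nussbaumSzkolaFst, hc, mul_zero]

theorem quantumRelEntropy_eq (h : IsDominatedBy A B) :
    quantumRelEntropy A B =
      weightRelEntropy (nussbaumSzkolaFst h.left.isHermitian h.right.isHermitian)
        (nussbaumSzkolaSnd h.left.isHermitian h.right.isHermitian) := by
  have hA := h.left.isHermitian
  have hB := h.right.isHermitian
  have hlogA : (A * cfc log A).trace.re = ∑ p : n × n, nussbaumSzkolaFst hA hB p *
      log (hA.eigenvalues p.1) := by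
    have hcont (f : ℝ → ℝ) : ContinuousOn f (spectrum ℝ A) :=
      A.finite_real_spectrum.continuousOn f
    have hcfc : cfc (fun x => x * log x) A = A * cfc log A := by
      rw [cfc_mul _ _ A (hcont _) (hcont _), cfc_id' ℝ A]
    have := re_trace_cfc_mul_cfc hA hB (fun x => x * log x) 1
    rw [Pi.one_def, cfc_const_one ℝ B, Matrix.mul_one, hcfc] at this
    rw [this]
    refine Finset.sum_congr rfl fun p _ => ?_
    rw [nussbaumSzkolaFst]
    ring
  have hlogB : (A * cfc log B).trace.re = ∑ p : n × n, nussbaumSzkolaFst hA hB p *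
      log (hB.eigenvalues p.2) := by
    have := re_trace_cfc_mul_cfc hA hB id log
    rw [cfc_id ℝ A] at this
    rw [this]
    refine Finset.sum_congr rfl fun p _ => ?_
    rw [nussbaumSzkolaFst, id_eq]
    ring
  rw [quantumRelEntropy, Matrix.mul_sub, trace_sub, Complex.sub_re, hlogA, hlogB,
    weightRelEntropy, ← Finset.sum_sub_distrib]
  refine Finset.sum_congr rfl fun p _ => ?_
  rcases eq_or_ne (nussbaumSzkolaFst hA hB p) 0 with hp | hp
  · simp [hp]
  · have hq := mt (h.nussbaumSzkolaFst_eq_zero p) hp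
    have hc : Complex.normSq (eigenCoeff hA hB 1 p.1 p.2) ≠ 0 := right_ne_zero_of_mul hp
    rw [← mul_sub, ← log_div (left_ne_zero_of_mul hp) (left_ne_zero_of_mul hq),
      nussbaumSzkolaFst, nussbaumSzkolaSnd, mul_div_mul_right _ _ hc]

end IsDominatedBy

theorem resolventForm_eq_sum (hA : A.IsHermitian) (hB : B.IsHermitian) (t : ℝ)
    (X : Matrix n n ℂ) :
    resolventForm t A B X = ∑ p : n × n,
      (2 * hA.eigenvalues p.1 * (eigenCoeff hA hB X p.1 p.2 *
          star (eigenCoeff hA hB 1 p.1 p.2)).re -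
        (hB.eigenvalues p.2 + t * hA.eigenvalues p.1) *
          Complex.normSq (eigenCoeff hA hB X p.1 p.2)) := by
  have hlin := trace_cfc_mul_mul_cfc_mul_conjTranspose hA hB id 1 X 1
  have hB_sq := trace_cfc_mul_mul_cfc_mul_conjTranspose hA hB 1 id X X
  have hA_sq := trace_cfc_mul_mul_cfc_mul_conjTranspose hA hB id 1 X X
  simp only [cfc_id ℝ A, cfc_id ℝ B, Pi.one_def, cfc_const_one ℝ A, cfc_const_one ℝ B, id_eq,
    conjTranspose_one, Complex.ofReal_one, one_mul, mul_one,
    Complex.star_def, Complex.mul_conj] at hlin hB_sq hA_sq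
  rw [resolventForm, hlin, hB_sq, Matrix.mul_assoc Xᴴ, trace_mul_comm Xᴴ, hA_sq]
  simp only [Complex.re_sum, Finset.mul_sum, ← Finset.sum_sub_distrib, Complex.re_ofReal_mul,
    Complex.ofReal_re, Complex.star_def]
  exact Finset.sum_congr rfl fun p _ => by ring

theorem isGreatest_range_two_mul_re_sub_normSq {a d : ℝ} (hd : 0 ≤ d) (had : d = 0 → a = 0)
    (c : ℂ) :
    IsGreatest (Set.range fun x : ℂ => 2 * a * (x * star c).re - d * Complex.normSq x)
      (a ^ 2 / d * Complex.normSq c) := by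
  rcases hd.eq_or_lt with rfl | hd
  · simp [had rfl]
  have hsquare (x : ℂ) : 2 * a * (x * star c).re - d * Complex.normSq x =
      a ^ 2 / d * Complex.normSq c - d * Complex.normSq (x - (a / d : ℝ) * c) := by
    simp only [Complex.normSq_apply, Complex.star_def, Complex.mul_re, Complex.sub_re,
      Complex.sub_im, Complex.mul_im, Complex.conj_re, Complex.conj_im, Complex.ofReal_re,
      Complex.ofReal_im]
    field_simp
    ring
  refine ⟨⟨(a / d : ℝ) * c, by
    simp only [hsquare, sub_self, Complex.normSq_zero, mul_zero, sub_zero]⟩, ?_⟩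
  rintro _ ⟨x, rfl⟩
  simp only [hsquare]
  exact sub_le_self _ (mul_nonneg hd.le (Complex.normSq_nonneg _))

theorem IsDominatedBy.isGreatest_range_resolventForm (h : IsDominatedBy A B) {t : ℝ} (ht : 0 < t) :
    IsGreatest (Set.range (resolventForm t A B))
      (resolventSum t (nussbaumSzkolaFst h.left.isHermitian h.right.isHermitian)
        (nussbaumSzkolaSnd h.left.isHermitian h.right.isHermitian)) := by
  have hA := h.left.isHermitian
  have hB := h.right.isHermitian
  have hmax (p : n × n) := by
    have ha := h.left.eigenvalues_nonneg p.1
    have hb := h.right.eigenvalues_nonneg p.2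
    exact isGreatest_range_two_mul_re_sub_normSq
      (a := hA.eigenvalues p.1) (d := hB.eigenvalues p.2 + t * hA.eigenvalues p.1) (by positivity)
      (fun h0 => by nlinarith) (eigenCoeff hA hB 1 p.1 p.2)
  have hsum : resolventSum t (nussbaumSzkolaFst hA hB) (nussbaumSzkolaSnd hA hB) =
      ∑ p : n × n, hA.eigenvalues p.1 ^ 2 / (hB.eigenvalues p.2 + t * hA.eigenvalues p.1) *
        Complex.normSq (eigenCoeff hA hB 1 p.1 p.2) := by
    refine Finset.sum_congr rfl fun p _ => ?_
    rw [nussbaumSzkolaFst, nussbaumSzkolaSnd, ← mul_assoc, ← add_mul, mul_pow]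
    rcases eq_or_ne (Complex.normSq (eigenCoeff hA hB 1 p.1 p.2)) 0 with hc | hc
    · simp [hc]
    · rw [sq (Complex.normSq _), ← mul_assoc, mul_div_mul_right _ _ hc, mul_div_right_comm]
  rw [hsum]
  constructor
  · choose x hx using fun p => (hmax p).1
    obtain ⟨X, hX⟩ := eigenCoeff_surjective hA hB (Matrix.of fun i j => x (i, j))
    refine ⟨X, ?_⟩
    rw [resolventForm_eq_sum hA hB, hX]
    exact Finset.sum_congr rfl fun p _ => hx p
  · rintro _ ⟨X, rfl⟩
    rw [resolventForm_eq_sum hA hB]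
    exact Finset.sum_le_sum fun p _ => (hmax p).2 ⟨_, rfl⟩

end Spectral

section Monotonicity

variable {ι κ m n : Type*} [Fintype ι] [Fintype κ] [Fintype m] [Fintype n] [DecidableEq m]
  [DecidableEq n]

theorem sum_quantumRelEntropy_le_of_resolventForm {A B : ι → Matrix n n ℂ}
    {A' B' : κ → Matrix m m ℂ} (h : ∀ i, IsDominatedBy (A i) (B i))
    (h' : ∀ j, IsDominatedBy (A' j) (B' j))
    (htr : ∑ j, (A' j).trace.re = ∑ i, (A i).trace.re)
    (hform : ∀ t, 0 < t → ∀ X' : κ → Matrix m m ℂ, ∃ X : ι → Matrix n n ℂ,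
      ∑ j, resolventForm t (A' j) (B' j) (X' j) ≤ ∑ i, resolventForm t (A i) (B i) (X i)) :
    ∑ j, quantumRelEntropy (A' j) (B' j) ≤ ∑ i, quantumRelEntropy (A i) (B i) := by
  simp only [fun i => (h i).quantumRelEntropy_eq, fun j => (h' j).quantumRelEntropy_eq]
  refine sum_weightRelEntropy_le_of_sum_resolventSum_le
    (fun i => (h i).nussbaumSzkolaFst_nonneg) (fun i => (h i).nussbaumSzkolaSnd_nonneg)
    (fun i => (h i).nussbaumSzkolaFst_eq_zero) (fun j => (h' j).nussbaumSzkolaFst_nonneg)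
    (fun j => (h' j).nussbaumSzkolaSnd_nonneg) (fun j => (h' j).nussbaumSzkolaFst_eq_zero)
    (by simpa only [sum_nussbaumSzkolaFst] using htr) fun t ht => ?_
  have hmax i := (h i).isGreatest_range_resolventForm ht
  choose X' hX' using fun j => ((h' j).isGreatest_range_resolventForm ht).1
  obtain ⟨X, hX⟩ := hform t ht X'
  calc
    _ = ∑ j, resolventForm t (A' j) (B' j) (X' j) := Finset.sum_congr rfl fun j _ => (hX' j).symm
    _ ≤ ∑ i, resolventForm t (A i) (B i) (X i) := hX
    _ ≤ _ := Finset.sum_le_sum fun i _ => (hmax i).2 ⟨X i, rfl⟩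

theorem quantumRelEntropy_sum_le {A B : ι → Matrix n n ℂ} (h : ∀ i, IsDominatedBy (A i) (B i)) :
    quantumRelEntropy (∑ i, A i) (∑ i, B i) ≤ ∑ i, quantumRelEntropy (A i) (B i) := by
  have := sum_quantumRelEntropy_le_of_resolventForm (κ := Unit) h (fun _ => .sum h)
    (by simp [trace_sum]) fun t _ X => ⟨fun _ => X (), by simp [sum_resolventForm]⟩
  simpa using this

theorem sum_quantumRelEntropy_instrument_le {K : ι → κ → Matrix m n ℂ}
    (hK : ∑ i, ∑ j, (K i j)ᴴ * K i j = 1) {A B : Matrix n n ℂ} (h : IsDominatedBy A B) :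
    ∑ i, quantumRelEntropy (∑ j, K i j * A * (K i j)ᴴ) (∑ j, K i j * B * (K i j)ᴴ) ≤
      quantumRelEntropy A B := by
  have hK' : ∑ x : ι × κ, (K x.1 x.2)ᴴ * K x.1 x.2 = 1 := by rwa [Fintype.sum_prod_type]
  have htr : ∑ i, (∑ j, K i j * A * (K i j)ᴴ).trace.re = A.trace.re := by
    have hcycle (i : ι) (j : κ) :
        (K i j * A * (K i j)ᴴ).trace = ((K i j)ᴴ * K i j * A).trace := trace_mul_cycle _ _ _
    simp only [trace_sum, hcycle]
    rw [← Complex.re_sum]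
    simp only [← trace_sum, ← Matrix.sum_mul, hK, Matrix.one_mul]
  have := sum_quantumRelEntropy_le_of_resolventForm (ι := Unit) (fun _ => h)
    (fun i => .sum fun j => h.mul_mul_conjTranspose_same (K i j)) (by simpa using htr)
    fun t ht Z => ⟨fun _ => ∑ x : ι × κ, (K x.1 x.2)ᴴ * Z x.1 * K x.1 x.2, by
      simpa [Fintype.sum_prod_type, sum_resolventForm] using
        sum_resolventForm_mul_mul_conjTranspose_le hK' h.left h.right ht.le fun x => Z x.1⟩
  simpa using this

end Monotonicity

section PartialTrace

variable {a b c m : Type*}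

theorem ptraceSnd_smul [Fintype b] (r : ℂ) (σ : Matrix (a × b) (a × b) ℂ) :
    ptraceSnd (r • σ) = r • ptraceSnd σ := by
  ext i j
  simp [ptraceSnd, Finset.mul_sum]

theorem ptraceSnd_sum {ι : Type*} [Fintype ι] [Fintype b] (σ : ι → Matrix (a × b) (a × b) ℂ) :
    ptraceSnd (∑ i, σ i) = ∑ i, ptraceSnd (σ i) := by
  ext x y
  simp only [ptraceSnd, of_apply, Matrix.sum_apply]
  exact Finset.sum_comm

theorem posSemidef_ptraceSnd [Fintype b] {σ : Matrix (a × b) (a × b) ℂ} (hσ : σ.PosSemidef) :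
    (ptraceSnd σ).PosSemidef := by
  have hsum : ptraceSnd σ = ∑ k, σ.submatrix (fun i => (i, k)) (fun i => (i, k)) := by
    ext i j
    simp [ptraceSnd, Matrix.sum_apply]
  rw [hsum]
  exact posSemidef_sum _ fun k _ => hσ.submatrix _

theorem posSemidef_ptraceFst₃ [Fintype a] {Z : Matrix ((a × b) × c) ((a × b) × c) ℂ}
    (hZ : Z.PosSemidef) : (ptraceFst₃ Z).PosSemidef := by
  have hsum : ptraceFst₃ Z =
      ∑ i, Z.submatrix (fun p => ((i, p.1), p.2)) (fun p => ((i, p.1), p.2)) := by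
    ext p q
    simp [ptraceFst₃, Matrix.sum_apply]
  rw [hsum]
  exact posSemidef_sum _ fun i _ => hZ.submatrix _

theorem trace_ptraceFst₃ [Fintype a] [Fintype b] [Fintype c]
    (Z : Matrix ((a × b) × c) ((a × b) × c) ℂ) : (ptraceFst₃ Z).trace = Z.trace := by
  simp only [trace, diag_apply, ptraceFst₃, of_apply, Fintype.sum_prod_type]
  exact Finset.sum_comm_cycle

theorem trace_mul_kronecker_one [Fintype a] [Fintype b] [DecidableEq b]
    (σ : Matrix (a × b) (a × b) ℂ) (T : Matrix a a ℂ) :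
    (σ * (T ⊗ₖ (1 : Matrix b b ℂ))).trace = (ptraceSnd σ * T).trace := by
  simp only [trace, diag_apply, mul_apply, ptraceSnd, of_apply, kroneckerMap_apply, one_apply,
    Fintype.sum_prod_type, mul_ite, mul_one, mul_zero, Finset.sum_ite_eq', Finset.mem_univ,
    if_true, Finset.sum_mul]
  exact Finset.sum_congr rfl fun i _ => Finset.sum_comm

theorem trace_ptraceSnd [Fintype a] [Fintype b] (σ : Matrix (a × b) (a × b) ℂ) :
    (ptraceSnd σ).trace = σ.trace := by
  simp [trace, ptraceSnd, Fintype.sum_prod_type]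

theorem ptraceSnd_kronecker_one_mul_mul [Fintype a] [Fintype b] [DecidableEq b]
    (L : Matrix m a ℂ) (σ : Matrix (a × b) (a × b) ℂ) (R : Matrix a m ℂ) :
    ptraceSnd ((L ⊗ₖ (1 : Matrix b b ℂ)) * σ * (R ⊗ₖ (1 : Matrix b b ℂ))) =
      L * ptraceSnd σ * R := by
  ext x y
  simp only [mul_apply, kroneckerMap_apply, one_apply, ptraceSnd, of_apply, Fintype.sum_prod_type,
    mul_ite, mul_one, mul_zero, ite_mul, zero_mul, Finset.sum_ite_eq, Finset.sum_ite_eq',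
    Finset.mem_univ, if_true, Finset.mul_sum, Finset.sum_mul]
  rw [Finset.sum_comm]
  exact Finset.sum_congr rfl fun j _ => Finset.sum_comm

theorem ptraceSnd_ptraceFst₃_kronecker_one [Fintype a] [Fintype c] [DecidableEq c]
    (Z : Matrix ((a × b) × c) ((a × b) × c) ℂ) :
    ptraceSnd (ptraceFst₃ Z) ⊗ₖ (1 : Matrix c c ℂ) =
      ptraceFst₃ (ptraceSnd Z ⊗ₖ (1 : Matrix c c ℂ)) := by
  ext p q
  simp only [ptraceSnd, ptraceFst₃, kroneckerMap_apply, of_apply, Finset.sum_mul]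
  exact Finset.sum_comm

theorem cfc_kronecker_one [Fintype a] [Fintype b] [DecidableEq a] [DecidableEq b]
    {τ : Matrix a a ℂ} (hτ : τ.IsHermitian) (f : ℝ → ℝ) :
    cfc f (τ ⊗ₖ (1 : Matrix b b ℂ)) = cfc f τ ⊗ₖ (1 : Matrix b b ℂ) := by
  let φ : Matrix a a ℂ →⋆ₐ[ℝ] Matrix (a × b) (a × b) ℂ :=
    { toFun := fun X => X ⊗ₖ 1
      map_one' := by simp
      map_mul' := fun X Y => by rw [← mul_kronecker_mul, Matrix.one_mul]
      map_zero' := by simp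
      map_add' := fun X Y => add_kronecker _ _ _
      commutes' := fun r => by simp [Algebra.algebraMap_eq_smul_one, smul_kronecker]
      map_star' := fun X => by simp [star_eq_conjTranspose, conjTranspose_kronecker] }
  have hφ : Continuous φ := continuous_matrix fun i j =>
    (continuous_id.matrix_elem i.1 j.1).mul continuous_const
  exact (StarAlgHomClass.map_cfc φ f τ (τ.finite_real_spectrum.continuousOn f) hφ hτ
    (IsSelfAdjoint.map hτ φ)).symm

theorem isDominatedBy_ptraceSnd_kronecker_one [Fintype a] [Fintype b] [DecidableEq b]
    {σ : Matrix (a × b) (a × b) ℂ} (hσ : σ.PosSemidef) :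
    IsDominatedBy σ (ptraceSnd σ ⊗ₖ (1 : Matrix b b ℂ)) where
  left := hσ
  right := (posSemidef_ptraceSnd hσ).kronecker .one
  mulVec_eq_zero x hx := by
    let embed (k : b) (y : a → ℂ) (p : a × b) : ℂ := if p.2 = k then y p.1 else 0
    have hx_eq : x = ∑ k, embed k fun i => x (i, k) := by
      ext p
      simp [embed]
    have hslice (l : b) : ptraceSnd σ *ᵥ (fun i => x (i, l)) = 0 := by
      ext i
      simpa [mulVec, dotProduct, Fintype.sum_prod_type, one_apply] using congrFun hx (i, l)
    have hquad (y : a → ℂ) : ∑ k, star (embed k y) ⬝ᵥ (σ *ᵥ embed k y) =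
        star y ⬝ᵥ (ptraceSnd σ *ᵥ y) := by
      simp only [dotProduct, mulVec, ptraceSnd, embed, of_apply, Pi.star_apply, apply_ite star,
        star_zero, Fintype.sum_prod_type, mul_ite, ite_mul, mul_zero, zero_mul,
        Finset.sum_ite_irrel, Finset.sum_const_zero, Finset.sum_ite_eq', Finset.mem_univ, if_true,
        Finset.mul_sum, Finset.sum_mul]
      exact Finset.sum_comm_cycle.symm
    have hker (y : a → ℂ) (hy : ptraceSnd σ *ᵥ y = 0) (k : b) : σ *ᵥ embed k y = 0 := by
      have hzero := hquad y
      rw [hy, dotProduct_zero,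
        Finset.sum_eq_zero_iff_of_nonneg fun k _ => hσ.dotProduct_mulVec_nonneg _] at hzero
      exact (hσ.dotProduct_mulVec_zero_iff _).1 (hzero k (Finset.mem_univ k))
    rw [hx_eq, mulVec_sum]
    exact Finset.sum_eq_zero fun k _ => hker _ (hslice k) k

end PartialTrace

section ConditionalEntropy

variable {ι a b : Type*} [Fintype a] [Fintype b] [DecidableEq a] [DecidableEq b]

/-- Conditional entropy `S(b | a) = S[σ] - S[σₐ]` of a positive matrix on the product `a × b`, not
required to have trace `1`. -/
noncomputable def condEntropy (σ : Matrix (a × b) (a × b) ℂ) : ℝ :=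
  entropy σ - entropy (ptraceSnd σ)

theorem condEntropy_eq_neg_quantumRelEntropy {σ : Matrix (a × b) (a × b) ℂ} (hσ : σ.PosSemidef) :
    condEntropy σ = -quantumRelEntropy σ (ptraceSnd σ ⊗ₖ (1 : Matrix b b ℂ)) := by
  have hτ := (posSemidef_ptraceSnd hσ).isHermitian
  rw [condEntropy, quantumRelEntropy, Matrix.mul_sub, trace_sub, cfc_mul_log hσ.isHermitian,
    cfc_kronecker_one hτ, trace_mul_kronecker_one, cfc_mul_log hτ,
    entropy_eq_re_trace_cfc hσ.isHermitian, entropy_eq_re_trace_cfc hτ]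
  simp only [trace_neg, Complex.sub_re, Complex.neg_re]
  ring

theorem condEntropy_smul {σ : Matrix (a × b) (a × b) ℂ} (hσ : σ.PosSemidef) (r : ℝ) :
    condEntropy ((r : ℂ) • σ) = r * condEntropy σ := by
  rw [condEntropy, condEntropy, ptraceSnd_smul, entropy_smul hσ.isHermitian,
    entropy_smul (posSemidef_ptraceSnd hσ).isHermitian, trace_ptraceSnd]
  ring

theorem sum_condEntropy_le [Fintype ι] {σ : ι → Matrix (a × b) (a × b) ℂ}
    (hσ : ∀ i, (σ i).PosSemidef) : ∑ i, condEntropy (σ i) ≤ condEntropy (∑ i, σ i) := by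
  have hsum : ptraceSnd (∑ i, σ i) ⊗ₖ (1 : Matrix b b ℂ) =
      ∑ i, ptraceSnd (σ i) ⊗ₖ (1 : Matrix b b ℂ) := by
    rw [ptraceSnd_sum]
    ext p q
    simp [Matrix.sum_apply, Finset.sum_mul]
  rw [condEntropy_eq_neg_quantumRelEntropy (posSemidef_sum _ fun i _ => hσ i), hsum]
  simp only [fun i => condEntropy_eq_neg_quantumRelEntropy (hσ i), Finset.sum_neg_distrib]
  exact neg_le_neg
    (quantumRelEntropy_sum_le fun i => isDominatedBy_ptraceSnd_kronecker_one (hσ i))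

theorem sum_trace_mul_condEntropy_inv_trace_smul [Fintype ι] {σ : ι → Matrix (a × b) (a × b) ℂ}
    (hσ : ∀ i, (σ i).PosSemidef) :
    ∑ i with 0 < (σ i).trace.re,
        (σ i).trace.re * condEntropy ((((σ i).trace.re : ℂ))⁻¹ • σ i) =
      ∑ i, condEntropy (σ i) := by
  rw [Finset.sum_filter]
  refine Finset.sum_congr rfl fun i _ => ?_
  obtain ⟨hre, him⟩ := Complex.le_def.1 (hσ i).trace_nonneg
  split_ifs with hpos
  · rw [← Complex.ofReal_inv, condEntropy_smul (hσ i), mul_inv_cancel_left₀ hpos.ne']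
  · have hzero : σ i = 0 := (hσ i).trace_eq_zero_iff.1
      (Complex.ext (le_antisymm (not_lt.1 hpos) hre) him.symm)
    simpa [hzero] using (condEntropy_smul (hσ i) 0).symm

end ConditionalEntropy

section Measurement

variable {ι a b c m : Type*} [DecidableEq b] [DecidableEq c]

/-- The operator `k ⊗ 1 ⊗ 1` acting on the first factor of a threefold tensor product. -/
noncomputable def ampliation (b c : Type*) [DecidableEq b] [DecidableEq c] (k : Matrix m a ℂ) :
    Matrix ((m × b) × c) ((a × b) × c) ℂ :=
  (k ⊗ₖ (1 : Matrix b b ℂ)) ⊗ₖ (1 : Matrix c c ℂ)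

theorem conjTranspose_ampliation (k : Matrix m a ℂ) :
    (ampliation b c k)ᴴ = ampliation b c kᴴ := by
  simp [ampliation, conjTranspose_kronecker]

variable [Fintype b] [Fintype c] [Fintype m]

theorem sum_conjTranspose_ampliation_mul_self [Fintype ι] [DecidableEq a] {k : ι → Matrix m a ℂ}
    (hk : ∑ α, (k α)ᴴ * k α = 1) :
    ∑ α, (ampliation b c (k α))ᴴ * ampliation b c (k α) = 1 := by
  have hmul (α : ι) : (ampliation b c (k α))ᴴ * ampliation b c (k α) =
      ((k α)ᴴ * k α) ⊗ₖ 1 ⊗ₖ 1 := by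
    rw [conjTranspose_ampliation]
    simp [ampliation, ← mul_kronecker_mul]
  have hsum : ∑ α, ((k α)ᴴ * k α) ⊗ₖ (1 : Matrix b b ℂ) ⊗ₖ (1 : Matrix c c ℂ) =
      (∑ α, (k α)ᴴ * k α) ⊗ₖ (1 : Matrix b b ℂ) ⊗ₖ (1 : Matrix c c ℂ) := by
    ext p q
    simp [Matrix.sum_apply, Finset.sum_mul]
  rw [Finset.sum_congr rfl fun α _ => hmul α, hsum, hk, one_kronecker_one, one_kronecker_one]

/-- The Kraus operator `(⟨i| ⊗ 1 ⊗ 1) (k ⊗ 1 ⊗ 1)`. -/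
noncomputable def krausSlice (b c : Type*) [DecidableEq b] [DecidableEq c] (k : Matrix m a ℂ)
    (i : m) : Matrix (b × c) ((a × b) × c) ℂ :=
  (ampliation b c k).submatrix (fun p => ((i, p.1), p.2)) id

theorem sum_conjTranspose_krausSlice_mul_self (k : Matrix m a ℂ) :
    ∑ i, (krausSlice b c k i)ᴴ * krausSlice b c k i =
      (ampliation b c k)ᴴ * ampliation b c k := by
  ext p q
  simp [krausSlice, Matrix.sum_apply, mul_apply, Fintype.sum_prod_type]

variable [Fintype a]

/-- The state of the last two factors after the outcome with Kraus operator `k` on the first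
factor, not normalised: its trace is the probability of the outcome. -/
noncomputable def postMeasurement (k : Matrix m a ℂ) (ρ : Matrix ((a × b) × c) ((a × b) × c) ℂ) :
    Matrix (b × c) (b × c) ℂ :=
  ptraceFst₃ (ampliation b c k * ρ * (ampliation b c k)ᴴ)

theorem posSemidef_postMeasurement (k : Matrix m a ℂ) {ρ : Matrix ((a × b) × c) ((a × b) × c) ℂ}
    (hρ : ρ.PosSemidef) : (postMeasurement k ρ).PosSemidef :=
  posSemidef_ptraceFst₃ (hρ.mul_mul_conjTranspose_same _)

theorem ptraceSnd_postMeasurement_kronecker_one (k : Matrix m a ℂ)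
    (ρ : Matrix ((a × b) × c) ((a × b) × c) ℂ) :
    ptraceSnd (postMeasurement k ρ) ⊗ₖ (1 : Matrix c c ℂ) =
      postMeasurement k (ptraceSnd ρ ⊗ₖ (1 : Matrix c c ℂ)) := by
  rw [postMeasurement, ptraceSnd_ptraceFst₃_kronecker_one, postMeasurement,
    conjTranspose_ampliation]
  simp only [ampliation, ptraceSnd_kronecker_one_mul_mul, ← mul_kronecker_mul, Matrix.one_mul]

theorem postMeasurement_apply (k : Matrix m a ℂ) (ρ : Matrix ((a × b) × c) ((a × b) × c) ℂ)
    (p q : b × c) :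
    postMeasurement k ρ p q =
      ∑ x, ∑ y, (kᴴ * k) y x * ρ ((x, p.1), p.2) ((y, q.1), q.2) := by
  rw [postMeasurement, conjTranspose_ampliation]
  simp only [ptraceFst₃, ampliation, mul_apply, kroneckerMap_apply, one_apply, of_apply,
    Fintype.sum_prod_type, mul_ite, ite_mul, mul_one, mul_zero, zero_mul, Finset.sum_ite_eq,
    Finset.sum_ite_eq', Finset.mem_univ, if_true, Finset.sum_mul]
  rw [Finset.sum_comm_cycle]
  refine Finset.sum_congr rfl fun x _ => Finset.sum_comm.trans ?_
  exact Finset.sum_congr rfl fun y _ => Finset.sum_congr rfl fun i _ => by ring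

theorem sum_postMeasurement [Fintype ι] [DecidableEq a] {k : ι → Matrix m a ℂ}
    (hk : ∑ α, (k α)ᴴ * k α = 1) (ρ : Matrix ((a × b) × c) ((a × b) × c) ℂ) :
    ∑ α, postMeasurement (k α) ρ = ptraceFst₃ ρ := by
  ext p q
  simp only [Matrix.sum_apply, postMeasurement_apply]
  rw [Finset.sum_comm]
  simp only [Finset.sum_comm (s := (Finset.univ : Finset ι)), ← Finset.sum_mul,
    ← Matrix.sum_apply, hk]
  simp [one_apply, ptraceFst₃]

theorem postMeasurement_eq_sum_krausSlice (k : Matrix m a ℂ)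
    (ρ : Matrix ((a × b) × c) ((a × b) × c) ℂ) :
    postMeasurement k ρ = ∑ i, krausSlice b c k i * ρ * (krausSlice b c k i)ᴴ := by
  ext p q
  simp [postMeasurement, ptraceFst₃, krausSlice, Matrix.sum_apply, mul_apply]

theorem condEntropy_le_sum_condEntropy_postMeasurement [Fintype ι] [DecidableEq a]
    {k : ι → Matrix m a ℂ} (hk : ∑ α, (k α)ᴴ * k α = 1)
    {ρ : Matrix ((a × b) × c) ((a × b) × c) ℂ} (hρ : ρ.PosSemidef) :
    condEntropy ρ ≤ ∑ α, condEntropy (postMeasurement (k α) ρ) := by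
  have hK : ∑ α, ∑ i, (krausSlice b c (k α) i)ᴴ * krausSlice b c (k α) i = 1 := by
    simp only [sum_conjTranspose_krausSlice_mul_self, sum_conjTranspose_ampliation_mul_self hk]
  have hmono := sum_quantumRelEntropy_instrument_le hK (isDominatedBy_ptraceSnd_kronecker_one hρ)
  simp only [← postMeasurement_eq_sum_krausSlice, ← ptraceSnd_postMeasurement_kronecker_one]
    at hmono
  simp only [condEntropy_eq_neg_quantumRelEntropy hρ, Finset.sum_neg_distrib,
    fun α => condEntropy_eq_neg_quantumRelEntropy (posSemidef_postMeasurement (k α) hρ)]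
  exact neg_le_neg hmono

theorem sum_condEntropy_postMeasurement_le [Fintype ι] [DecidableEq a]
    {k : ι → Matrix m a ℂ} (hk : ∑ α, (k α)ᴴ * k α = 1)
    {ρ : Matrix ((a × b) × c) ((a × b) × c) ℂ} (hρ : ρ.PosSemidef) :
    ∑ α, condEntropy (postMeasurement (k α) ρ) ≤ condEntropy (ptraceFst₃ ρ) :=
  sum_postMeasurement hk ρ ▸ sum_condEntropy_le fun α => posSemidef_postMeasurement (k α) hρ

end Measurement

theorem intermediate_strong_subadditivity_general
    {ι m n₁ n₂ n₃ : Type*} [Fintype ι] [Fintype m] [Fintype n₁] [Fintype n₂] [Fintype n₃]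
    [DecidableEq n₁] [DecidableEq n₂] [DecidableEq n₃]
    (ρ : Matrix ((n₁ × n₂) × n₃) ((n₁ × n₂) × n₃) ℂ)
    (hρ : ρ.PosSemidef)
    (k : ι → Matrix m n₁ ℂ)
    (hk : ∑ α, (k α)ᴴ * k α = 1)
    (n : ι → ℝ)
    (hn : ∀ α, n α =
      ((((k α ⊗ₖ (1 : Matrix n₂ n₂ ℂ)) ⊗ₖ (1 : Matrix n₃ n₃ ℂ)) * ρ *
        (((k α)ᴴ ⊗ₖ (1 : Matrix n₂ n₂ ℂ)) ⊗ₖ (1 : Matrix n₃ n₃ ℂ))).trace).re)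
    (ρ23 : ι → Matrix (n₂ × n₃) (n₂ × n₃) ℂ)
    (hρ23 : ∀ α, 0 < n α → ρ23 α = ((n α : ℂ))⁻¹ •
      ptraceFst₃ (((k α ⊗ₖ (1 : Matrix n₂ n₂ ℂ)) ⊗ₖ (1 : Matrix n₃ n₃ ℂ)) * ρ *
        (((k α)ᴴ ⊗ₖ (1 : Matrix n₂ n₂ ℂ)) ⊗ₖ (1 : Matrix n₃ n₃ ℂ))))
    (ρ2 : ι → Matrix n₂ n₂ ℂ)
    (hρ2 : ∀ α, 0 < n α → ρ2 α = ptraceSnd (ρ23 α)) :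
    entropy ρ - entropy (ptraceSnd ρ) ≤
      (∑ α ∈ Finset.univ.filter (fun α => 0 < n α),
        n α * (entropy (ρ23 α) - entropy (ρ2 α)))
    ∧ (∑ α ∈ Finset.univ.filter (fun α => 0 < n α),
        n α * (entropy (ρ23 α) - entropy (ρ2 α))) ≤
      entropy (ptraceFst₃ ρ) - entropy (ptraceSnd (ptraceFst₃ ρ)) := by
  have hK (α : ι) : ((k α)ᴴ ⊗ₖ (1 : Matrix n₂ n₂ ℂ)) ⊗ₖ (1 : Matrix n₃ n₃ ℂ) =
      (ampliation n₂ n₃ (k α))ᴴ := (conjTranspose_ampliation (k α)).symm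
  have hn' (α : ι) : n α = (postMeasurement (k α) ρ).trace.re := by
    rw [hn, postMeasurement, trace_ptraceFst₃, hK, ampliation]
  have hρ23' (α : ι) (hα : 0 < n α) : ρ23 α = (n α : ℂ)⁻¹ • postMeasurement (k α) ρ := by
    rw [hρ23 α hα, postMeasurement, hK, ampliation]
  have hsum : ∑ α with 0 < n α, n α * (entropy (ρ23 α) - entropy (ρ2 α)) =
      ∑ α, condEntropy (postMeasurement (k α) ρ) := by
    rw [← sum_trace_mul_condEntropy_inv_trace_smul fun α => posSemidef_postMeasurement (k α) hρ]
    simp only [← hn']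
    refine Finset.sum_congr rfl fun α hα => ?_
    have hpos := (Finset.mem_filter.1 hα).2
    rw [hρ2 α hpos, hρ23' α hpos, condEntropy]
  rw [hsum]
  exact ⟨condEntropy_le_sum_condEntropy_postMeasurement hk hρ,
    sum_condEntropy_postMeasurement_le hk hρ⟩

/-- **Intermediate strengthening of strong subadditivity**:
`S[ρ₁₂₃] − S[ρ₁₂] ≤ ∑_{α : n^α>0} n^α (S[ρ₂₃^α] − S[ρ₂^α]) ≤ S[ρ₂₃] − S[ρ₂]`. -/
theorem intermediate_strong_subadditivity
    {n₁ n₂ n₃ : Type*} [Fintype n₁] [Fintype n₂] [Fintype n₃]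
    [DecidableEq n₁] [DecidableEq n₂] [DecidableEq n₃] {M : ℕ}
    (ρ : Matrix ((n₁ × n₂) × n₃) ((n₁ × n₂) × n₃) ℂ)
    (hρ : ρ.PosSemidef) (hρtr : ρ.trace = 1)
    (k : Fin M → Matrix n₁ n₁ ℂ)
    (hk : ∑ α, (k α)ᴴ * k α = 1)
    (n : Fin M → ℝ)
    (hn : ∀ α, n α =
      ((((k α ⊗ₖ (1 : Matrix n₂ n₂ ℂ)) ⊗ₖ (1 : Matrix n₃ n₃ ℂ)) * ρ *
        (((k α)ᴴ ⊗ₖ (1 : Matrix n₂ n₂ ℂ)) ⊗ₖ (1 : Matrix n₃ n₃ ℂ))).trace).re)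
    (ρ23 : Fin M → Matrix (n₂ × n₃) (n₂ × n₃) ℂ)
    (hρ23 : ∀ α, 0 < n α → ρ23 α = ((n α : ℂ))⁻¹ •
      ptraceFst₃ (((k α ⊗ₖ (1 : Matrix n₂ n₂ ℂ)) ⊗ₖ (1 : Matrix n₃ n₃ ℂ)) * ρ *
        (((k α)ᴴ ⊗ₖ (1 : Matrix n₂ n₂ ℂ)) ⊗ₖ (1 : Matrix n₃ n₃ ℂ))))
    (ρ2 : Fin M → Matrix n₂ n₂ ℂ)
    (hρ2 : ∀ α, 0 < n α → ρ2 α = ptraceSnd (ρ23 α)) :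
    entropy ρ - entropy (ptraceSnd ρ) ≤
      (∑ α ∈ Finset.univ.filter (fun α => 0 < n α),
        n α * (entropy (ρ23 α) - entropy (ρ2 α)))
    ∧ (∑ α ∈ Finset.univ.filter (fun α => 0 < n α),
        n α * (entropy (ρ23 α) - entropy (ρ2 α))) ≤
      entropy (ptraceFst₃ ρ) - entropy (ptraceSnd (ptraceFst₃ ρ)) :=
  intermediate_strong_subadditivity_general ρ hρ k hk n hn ρ23 hρ23 ρ2 hρ2
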